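/- Divided powers of f₀ and f₁ on lattice vectors: for all integers m ≥ 0, with e^{mα} := 1 ⊗ e^{mα}e^{0·α/2} ∈ W₀ and e^{mα}e^{α/2} := 1 ⊗ e^{mα}e^{α/2} ∈ W₁: (a) f₁^{(2m)} e^{mα} = (−1)^m q^{m(2m−1)} e^{−mα} in W₀; (b) f₀^{(2m+1)} e^{−mα} = (−1)^m q^{−(2m+1)(m−2)} e^{(m+1)α} in W₀; (c) f₀^{(2m)} e^{−mα}e^{α/2} = (−1)^m q^{−m(2m−5)} e^{mα}e^{α/2} in W₁; (d) f₁^{(2m+1)} e^{mα}e^{α/2} = (−1)^m q^{m(2m+1)} e^{−(m+1)α}e^{α/2} in W₁. -/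

import Mathlib

/-!
All four identities are instances of one computation with vertex operators. Write `G(z)` for
`exp (∑ c_n p_n zⁿ/n) = ∑ G_n zⁿ`. Up to powers of `q`, both `f₁` and `f₀` act on the polynomial
part of a vector by a component of `G(z) · exp (∑ d_n z⁻ⁿ ∂/∂p_n)`, where `c_n d_n = -(1 + tⁿ)` with
`t = q²` for `f₁` and `t = q⁻²` for `f₀`.

The second factor is the translation `p_n ↦ p_n + d_n z⁻ⁿ`, which multiplies `G(w)` by
`(1 - w/z)(1 - t w/z)`, because both sides satisfy the same linear differential equation in `w`.
Hence the `r`-fold iterate on `1` arises from the kernel `∏_{i<j} (z_i - z_j)(z_i - t z_j)` by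
replacing each monomial `z^ν` by `∏ G_{N - ν_i}`. The vectors in the theorem are those for which
`N = r - 1`. As the kernel is homogeneous of degree `r(r-1)` and `G` vanishes in negative degrees,
only the central monomial `∏ z_i^{r-1}` survives, so the iterate is a scalar.

By Lagrange interpolation in each variable, the central coefficient is a weighted sum of the values
of the kernel on the grid `{1, t, …, t^{r-1}}^r`. The kernel vanishes at every grid point except
`(1, t, …, t^{r-1})`, and this one value gives `(-1)^{r(r-1)/2} ∏_{k=1}^{r} (1 - t^k)/(1 - t)`, a
signed power of `q` times `[r]!`.
-/

open MvPolynomial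

noncomputable section

/-- The base field `F = ℚ(q)`. -/
abbrev Fq : Type := RatFunc ℚ

/-- The indeterminate `q ∈ ℚ(q)`. -/
def qq : Fq := RatFunc.X

/-- `Λ_F = F[p₁,p₂,…]`, with the variable `X n` (for `n : ℕ+`) the power sum `p_n`. -/
abbrev LamF : Type := MvPolynomial ℕ+ Fq

/-- The power sum `p_n`. -/
def ppF (n : ℕ+) : LamF := X n

/-- The family `g` with generating function `∑_k g_k t^k = exp (∑_{n≥1} c n · p_n tⁿ/n)`,
characterized by `g 0 = 1` and the recursion obtained by differentiating:
`(k+1) · g (k+1) = ∑_{i=0}^{k} c (i+1) · p_{i+1} · g (k−i)`. -/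
def genFamF (c : ℕ → Fq) : ℕ → LamF
  | 0 => 1
  | (k+1) => (((k : Fq) + 1)⁻¹) •
      ∑ i ∈ Finset.range (k+1), c (i+1) • (ppF ⟨i+1, Nat.succ_pos i⟩ * genFamF c (k - i))
  decreasing_by exact Nat.lt_succ_of_le (Nat.sub_le k i)

/-- The complete homogeneous symmetric function `h_k`. -/
def hhF : ℕ → LamF := genFamF fun _ => 1

/-- The elementary symmetric function `e_k`. -/
def eeF : ℕ → LamF := genFamF fun n => (-1)^(n+1)

/-- `h` indexed by `ℤ` (zero in negative degrees). -/
def hZF (n : ℤ) : LamF := if 0 ≤ n then hhF n.toNat else 0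

/-- `e` indexed by `ℤ` (zero in negative degrees). -/
def eZF (n : ℤ) : LamF := if 0 ≤ n then eeF n.toNat else 0

/-- The creation coefficients of `X⁺(z)`:
`exp (∑ ((1+q^{2n})q^{−n}/n)·p_n·zⁿ) = ∑_k HpF k · z^k`. -/
def HpF : ℕ → LamF := genFamF fun n => (1 + qq ^ (2*n)) * (qq⁻¹) ^ n

/-- `HpF` indexed by `ℤ`. -/
def HZp (n : ℤ) : LamF := if 0 ≤ n then HpF n.toNat else 0

/-- The annihilation avatars for `X⁺(z)`: since
`(1+q^{2n})q^{−n}/n · a_n = q^{−n}·∂/∂p_n`, the coefficient of `z^{−j}` in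
`exp (−∑ ((1+q^{2n})q^{−n}/n)·a_n·z^{−n})` is `ApF j` with `p_i ↦ i·∂/∂p_i`
substituted, where `∑_k ApF k t^k = exp (−∑ q^{−n} p_n tⁿ/n)`. -/
def ApF : ℕ → LamF := genFamF fun n => -((qq⁻¹) ^ n)

/-- The creation coefficients of `X⁻(z)`:
`exp (−∑ ((1+q^{2n})/n)·p_n·zⁿ) = ∑_k HmF k · z^k`. -/
def HmF : ℕ → LamF := genFamF fun n => -(1 + qq ^ (2*n))

/-- `HmF` indexed by `ℤ`. -/
def HZm (n : ℤ) : LamF := if 0 ≤ n then HmF n.toNat else 0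

/-- The differential operator `∏_i (i·∂/∂p_i)^(α i)`. -/
def monOpF (α : ℕ+ →₀ ℕ) : Module.End Fq LamF :=
  ((α.support.sort (· ≤ ·)).map fun (i : ℕ+) =>
    (((i : ℕ) : Fq) • (pderiv i).toLinearMap) ^ (α i)).prod

/-- `f(∂) P`: substitute `p_i ↦ i·∂/∂p_i` in `f` and apply to `P`. -/
def DopF (f : LamF) (P : LamF) : LamF := ∑ α ∈ f.support, f.coeff α • monOpF α P

/-- Bound for the weighted degree of `P` (weight of `p_i` is `i`). -/
def wboundF (P : LamF) : ℕ := P.support.sup fun α => α.sum fun i k => (i : ℕ) * k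

/-- The level-one Fock space `W_i = Λ_F ⊗ F[ℤα]e^{iα/2}`, realized as `ℤ →₀ Λ_F`;
`Finsupp.single m P` represents `P·e^{mα}e^{iα/2}`. -/
abbrev W : Type := ℤ →₀ LamF

/-- The Drinfeld current component `X_n^+` on `W_i` (the parameter `i ∈ {0,1}` enters
through `z^∂ e^{mα}e^{iα/2} = z^{2m+i} e^{mα}e^{iα/2}`): the coefficient of `z^{−n−1}` in
`X⁺(z) = exp(∑((1+q^{2n})q^{−n}/n)a_{−n}zⁿ)·exp(−∑((1+q^{2n})q^{−n}/n)a_n z^{−n})·e^α z^∂`,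
i.e. `X_n^+(P·e^{mα}) = ∑_j HpF_{j−n−1−2m−i} · (ApF j)(∂) P · e^{(m+1)α}`
(only the finitely many `j ≤ wboundF P` contribute). -/
def Xp (i n : ℤ) (w : W) : W :=
  w.sum fun m P => Finsupp.single (m+1)
    (∑ j ∈ Finset.range (wboundF P + 1),
      HZp ((j : ℤ) - n - 1 - 2*m - i) * DopF (ApF j) P)

/-- The Drinfeld current component `X_n^-` on `W_i`: the coefficient of `z^{−n−1}` in
`X⁻(z) = exp(−∑((1+q^{2n})/n)a_{−n}zⁿ)·exp(∑((1+q^{2n})/n)a_n z^{−n})·e^{−α} z^{−∂}`,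
i.e. `X_n^-(P·e^{mα}) = ∑_j HmF_{j+2m+i−n−1} · h_j(∂) P · e^{(m−1)α}`
(here `(1+q^{2n})/n · a_n = ∂/∂p_n`, whose generating family is `h`). -/
def Xm (i n : ℤ) (w : W) : W :=
  w.sum fun m P => Finsupp.single (m-1)
    (∑ j ∈ Finset.range (wboundF P + 1),
      HZm ((j : ℤ) + 2*m + i - n - 1) * DopF (hhF j) P)

/-- The `q`-factorial `[r]! = ∏_{k=1}^r (q^k − q^{−k})/(q − q^{−1})`. -/
def qfact (r : ℕ) : Fq := ∏ k ∈ Finset.range r, (qq ^ (k+1) - (qq⁻¹) ^ (k+1)) / (qq - qq⁻¹)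

/-- The divided power `x^{(r)} = x^r / [r]!` of an operator on `W`. -/
def divpow (f : W → W) (r : ℕ) (w : W) : W := (qfact r)⁻¹ • (f^[r] w)

/-- Schur function of an integer tuple: `s_ρ = det (h_{ρ_i − i + j})`. -/
def schurF {l : ℕ} (ρ : Fin l → ℤ) : LamF :=
  (Matrix.of fun i j : Fin l => hZF (ρ i - (i.1 : ℤ) + (j.1 : ℤ))).det

/-- Dual Schur function of an integer tuple: `s_{ρ'} = det (e_{ρ_i − i + j})`. -/
def schurEF {l : ℕ} (ρ : Fin l → ℤ) : LamF :=
  (Matrix.of fun i j : Fin l => eZF (ρ i - (i.1 : ℤ) + (j.1 : ℤ))).det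

/-- `q^{±∂}`: `q^{ε∂}(P·e^{mα}e^{iα/2}) = q^{ε(2m+i)}·P·e^{mα}e^{iα/2}`. -/
def qd (i ε : ℤ) (w : W) : W := w.sum fun m P => Finsupp.single m (qq ^ (ε * (2*m + i)) • P)

/-- The Chevalley generator `e₁ = X₀⁺`. -/
def che1 (i : ℤ) : W → W := Xp i 0
/-- The Chevalley generator `f₁ = X₀⁻`. -/
def chf1 (i : ℤ) : W → W := Xm i 0
/-- The Chevalley generator `e₀ = X₁⁻ ∘ q^{−∂}`. -/
def che0 (i : ℤ) (w : W) : W := Xm i 1 (qd i (-1) w)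
/-- The Chevalley generator `f₀ = q^∂ ∘ X₋₁⁺`. -/
def chf0 (i : ℤ) (w : W) : W := qd i 1 (Xp i (-1) w)

/-! ### Umbral evaluation of multivariate polynomials -/

section UmbralEval

variable {σ R A : Type*} [Fintype σ] [CommSemiring R] [CommSemiring A] [Algebra R A]

/-- Umbral evaluation at the sequence `g`: the linear map `z^ν ↦ ∏ i, g (ν i)`. Both coefficient
extraction from products of series and iterated divided differences are of this form. -/
def umbralEval (g : ℕ → A) : MvPolynomial σ R →ₗ[R] A :=
  (basisMonomials σ R).constr R fun ν => ∏ i, g (ν i)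

lemma umbralEval_monomial (g : ℕ → A) (ν : σ →₀ ℕ) (a : R) :
    umbralEval g (monomial ν a) = a • ∏ i, g (ν i) := by
  have h : monomial ν a = a • basisMonomials σ R ν := by simp [smul_monomial]
  rw [h, map_smul, umbralEval, Module.Basis.constr_basis]

lemma umbralEval_sum_mul_pow [DecidableEq σ] {ι : Type*} [Fintype ι] (w v : ι → R)
    (f : MvPolynomial σ R) :
    umbralEval (fun n => ∑ a, w a * v a ^ n) f =
      ∑ π : σ → ι, (∏ i, w (π i)) * eval (v ∘ π) f := by
  induction f using MvPolynomial.induction_on' with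
  | monomial ν a =>
    rw [umbralEval_monomial, Finset.prod_univ_sum, Fintype.piFinset_univ, Finset.smul_sum]
    refine Finset.sum_congr rfl fun π _ => ?_
    simp only [Finset.prod_mul_distrib, eval_monomial, smul_eq_mul, Function.comp_apply,
      Finsupp.prod_fintype _ _ fun _ => pow_zero _]
    ring
  | add p q hp hq => simp only [map_add, hp, hq, mul_add, Finset.sum_add_distrib]

lemma exists_lt_and_exists_gt_of_degree_eq {ν : σ →₀ ℕ} {N : ℕ}
    (hdeg : ν.degree = Fintype.card σ * N) (hne : ν ≠ Finsupp.equivFunOnFinite.symm fun _ => N) :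
    (∃ i, ν i < N) ∧ ∃ i, N < ν i := by
  have hsum : ∑ i, ν i = ∑ _i : σ, N := by simpa [Finsupp.degree_eq_sum] using hdeg
  constructor <;> by_contra! h <;> refine hne (Finsupp.ext fun i => ?_)
  · exact ((Finset.sum_eq_sum_iff_of_le fun i _ => h i).mp hsum.symm i (Finset.mem_univ i)).symm
  · exact (Finset.sum_eq_sum_iff_of_le fun i _ => h i).mp hsum i (Finset.mem_univ i)

lemma umbralEval_of_isHomogeneous {g : ℕ → A} {N : ℕ} (hN : g N = 1)
    (hg : (∀ n < N, g n = 0) ∨ ∀ n, N < n → g n = 0) {f : MvPolynomial σ R}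
    (hf : f.IsHomogeneous (Fintype.card σ * N)) :
    umbralEval g f = f.coeff (Finsupp.equivFunOnFinite.symm fun _ => N) • 1 := by
  conv_lhs => rw [f.as_sum, map_sum]
  rw [Finset.sum_eq_single (Finsupp.equivFunOnFinite.symm fun _ => N)]
  · simp [umbralEval_monomial, hN]
  · intro ν hν hne
    obtain ⟨⟨i, hi⟩, j, hj⟩ := exists_lt_and_exists_gt_of_degree_eq
      (hf.degree_eq_sum_deg_support hν).symm hne
    rw [umbralEval_monomial]
    rcases hg with hg | hg
    · rw [Finset.prod_eq_zero (Finset.mem_univ i) (hg _ hi), smul_zero]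
    · rw [Finset.prod_eq_zero (Finset.mem_univ j) (hg _ hj), smul_zero]
  · intro h
    rw [notMem_support_iff.mp h, monomial_zero, map_zero]

end UmbralEval

/-! ### The kernel and its central coefficient -/

section Kernel

/-- The kernel `∏_{i<j} (z_i - z_j)(z_i - t z_j)` in `r` variables. Up to sign and a monomial it is
the `t`-analogue of the Laurent polynomial `∏_{i≠j} (1 - z_i/z_j)` of Dyson's conjecture. -/
def dysonKernel {R : Type*} [CommRing R] (t : R) (r : ℕ) : MvPolynomial (Fin r) R :=
  ∏ i, ∏ j ∈ Finset.Ioi i, (X i - X j) * (X i - C t * X j)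

lemma dysonKernel_succ {R : Type*} [CommRing R] (t : R) (r : ℕ) :
    dysonKernel t (r + 1) =
      (∏ j : Fin r, (X 0 - X j.succ) * (X 0 - C t * X j.succ)) *
        rename Fin.succ (dysonKernel t r) := by
  simp [dysonKernel, Fin.prod_univ_succ, Fin.prod_Ioi_succ]

lemma isHomogeneous_dysonKernel {R : Type*} [CommRing R] (t : R) (r : ℕ) :
    (dysonKernel t (r + 1)).IsHomogeneous ((r + 1) * r) := by
  induction r with
  | zero => simpa [dysonKernel] using isHomogeneous_one (Fin 1) R
  | succ r ih =>
    rw [dysonKernel_succ]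
    have hfirst : (∏ j : Fin (r + 1), (X 0 - X j.succ) * (X 0 - C t * X j.succ) :
        MvPolynomial (Fin (r + 2)) R).IsHomogeneous (∑ _j : Fin (r + 1), (1 + 1)) :=
      IsHomogeneous.prod _ _ _ fun j _ =>
        ((isHomogeneous_X _ _).sub (isHomogeneous_X _ _)).mul
          ((isHomogeneous_X _ _).sub (isHomogeneous_C_mul_X _ _))
    convert hfirst.mul ih.rename_isHomogeneous using 1
    simp
    ring

lemma eval_dysonKernel {R : Type*} [CommRing R] (t : R) (r : ℕ) (x : Fin r → R) :
    eval x (dysonKernel t r) = ∏ i, ∏ j ∈ Finset.Ioi i, (x i - x j) * (x i - t * x j) := by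
  simp [dysonKernel]

variable {K : Type*} [Field K]

open Lagrange (nodalWeight)

lemma sum_nodalWeight_mul_pow {ι : Type*} [DecidableEq ι] {s : Finset ι} {v : ι → K}
    (hv : Set.InjOn v s) {n : ℕ} (hn : n < s.card) :
    ∑ a ∈ s, nodalWeight s v a * v a ^ n = if n = s.card - 1 then 1 else 0 := by
  have h := Lagrange.coeff_eq_sum hv (P := (Polynomial.X ^ n : Polynomial K)) (by simpa using hn)
  simp only [Polynomial.coeff_X_pow, Polynomial.eval_pow, Polynomial.eval_X] at h
  simp only [nodalWeight, Finset.prod_inv_distrib, eq_comm (a := n), h]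
  exact Finset.sum_congr rfl fun a _ => inv_mul_eq_div _ _

lemma coeff_eq_sum_nodalWeight_mul_eval {σ ι : Type*} [Fintype σ] [DecidableEq σ] [Fintype ι]
    [DecidableEq ι] [Nonempty ι] {v : ι → K} (hv : Function.Injective v) {f : MvPolynomial σ K}
    (hf : f.IsHomogeneous (Fintype.card σ * (Fintype.card ι - 1))) :
    f.coeff (Finsupp.equivFunOnFinite.symm fun _ => Fintype.card ι - 1) =
      ∑ π : σ → ι, (∏ i, nodalWeight Finset.univ v (π i)) * eval (v ∘ π) f := by
  have hcard : 0 < Fintype.card ι := Fintype.card_pos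
  have hpow : ∀ n < Fintype.card ι, ∑ a, nodalWeight Finset.univ v a * v a ^ n =
      if n = Fintype.card ι - 1 then 1 else 0 := fun n hn =>
    sum_nodalWeight_mul_pow hv.injOn hn
  rw [← umbralEval_sum_mul_pow, umbralEval_of_isHomogeneous (N := Fintype.card ι - 1) _ _ hf,
    smul_eq_mul, mul_one]
  · rw [hpow _ (by omega), if_pos rfl]
  · exact Or.inl fun n hn => by rw [hpow _ (by omega), if_neg hn.ne]

/-- The hypothesis makes `π` a permutation in which `a` occurs before `a + 1` for every `a`. -/
lemma eq_id_of_forall_lt_ne {r : ℕ} {π : Fin r → Fin r}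
    (h : ∀ i j, i < j → π i ≠ π j ∧ (π i : ℕ) ≠ π j + 1) : π = id := by
  have hinj : Function.Injective π := .of_lt_imp_ne fun i j hij => (h i j hij).1
  let τ : Equiv.Perm (Fin r) := Equiv.ofBijective π (Finite.injective_iff_bijective.mp hinj)
  have hτ : ∀ a, π (τ.symm a) = a := τ.apply_symm_apply
  have hmono : StrictMono τ.symm := by
    rcases r with _ | r
    · exact fun a => a.elim0
    refine Fin.strictMono_iff_lt_succ.mpr fun a => lt_of_not_ge fun hle => ?_
    have hlt : τ.symm a.succ < τ.symm a.castSucc :=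
      hle.lt_of_ne (τ.symm.injective.ne Fin.castSucc_lt_succ.ne')
    exact (h _ _ hlt).2 (by simp [hτ])
  have hid : (τ.symm : Fin r → Fin r) = id :=
    (hmono.range_inj strictMono_id).mp (by simp)
  funext a
  simpa [hid] using hτ a

lemma prod_nodalWeight {r : ℕ} (v : Fin r → K) :
    ∏ i, nodalWeight Finset.univ v i = ∏ i, ∏ j ∈ Finset.Ioi i, ((v i - v j) * (v j - v i))⁻¹ := by
  have h := Finset.prod_prod_Ioi_mul_eq_prod_prod_off_diag fun a b : Fin r => (v b - v a)⁻¹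
  simpa only [nodalWeight, Finset.compl_eq_univ_sdiff, ← Finset.erase_eq, mul_inv] using h.symm

variable {t : K}

lemma prod_range_one_sub_pow_div (ht : ∀ n : ℕ, 1 - t ^ (n + 1) ≠ 0) (r : ℕ) :
    ∏ j ∈ Finset.range r, (1 - t ^ (j + 2)) / (t ^ (j + 1) - 1) =
      (-1) ^ r * ((1 - t ^ (r + 1)) / (1 - t)) := by
  induction r with
  | zero => simpa using (div_self (by simpa using ht 0)).symm
  | succ r ih =>
    have hr : t ^ (r + 1) - 1 ≠ 0 := by simpa using neg_ne_zero.mpr (ht r)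
    have h1 : 1 - t ≠ 0 := by simpa using ht 0
    rw [Finset.prod_range_succ, ih]
    field_simp
    ring

lemma prod_Ioi_pow_sub_pow_div (ht0 : t ≠ 0) (ht : ∀ n : ℕ, 1 - t ^ (n + 1) ≠ 0) (r : ℕ) :
    ∏ i : Fin r, ∏ j ∈ Finset.Ioi i,
        (t ^ (i : ℕ) - t ^ ((j : ℕ) + 1)) / (t ^ (j : ℕ) - t ^ (i : ℕ)) =
      (-1) ^ r.choose 2 * ∏ k ∈ Finset.range r, (1 - t ^ (k + 1)) / (1 - t) := by
  induction r with
  | zero => simp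
  | succ r ih =>
    have hfirst : ∏ j : Fin r, (1 - t ^ ((j : ℕ) + 2)) / (t ^ ((j : ℕ) + 1) - 1) =
        (-1) ^ r * ((1 - t ^ (r + 1)) / (1 - t)) := by
      rw [Fin.prod_univ_eq_prod_range fun j => (1 - t ^ (j + 2)) / (t ^ (j + 1) - 1),
        prod_range_one_sub_pow_div ht]
    have hcancel : ∀ i j : ℕ, (t ^ (i + 1) - t ^ (j + 1 + 1)) / (t ^ (j + 1) - t ^ (i + 1)) =
        (t ^ i - t ^ (j + 1)) / (t ^ j - t ^ i) := fun i j => by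
      rw [← mul_div_mul_left (t ^ i - t ^ (j + 1)) _ ht0]
      ring
    simp only [Fin.prod_univ_succ, Fin.prod_Ioi_zero, Fin.prod_Ioi_succ, Fin.val_succ,
      Fin.val_zero, pow_zero, hcancel, ih, hfirst]
    rw [Finset.prod_range_succ, Nat.choose_succ_succ' r 1, Nat.choose_one_right, pow_add]
    ring

lemma prod_nodalWeight_mul_eval_dysonKernel (hinj : Function.Injective fun n : ℕ => t ^ n)
    (r : ℕ) :
    (∏ i, nodalWeight Finset.univ (fun a : Fin r => t ^ (a : ℕ)) i) *
        eval (fun a : Fin r => t ^ (a : ℕ)) (dysonKernel t r) =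
      (-1) ^ r.choose 2 * ∏ k ∈ Finset.range r, (1 - t ^ (k + 1)) / (1 - t) := by
  have ht0 : t ≠ 0 := by
    rintro rfl
    exact absurd (@hinj 1 2 (by simp)) (by norm_num)
  have ht : ∀ n : ℕ, 1 - t ^ (n + 1) ≠ 0 := fun n h =>
    n.succ_ne_zero (hinj (by simpa using (sub_eq_zero.mp h).symm))
  rw [← prod_Ioi_pow_sub_pow_div ht0 ht, prod_nodalWeight, eval_dysonKernel,
    ← Finset.prod_mul_distrib]
  refine Finset.prod_congr rfl fun i _ => ?_
  rw [← Finset.prod_mul_distrib]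
  refine Finset.prod_congr rfl fun j hj => ?_
  have hij : t ^ (i : ℕ) - t ^ (j : ℕ) ≠ 0 :=
    sub_ne_zero.mpr (hinj.ne (Fin.val_ne_of_ne (Finset.mem_Ioi.mp hj).ne))
  rw [inv_mul_eq_div, mul_div_mul_left _ _ hij, pow_succ']

/-- Among the grid points `(t^{π 0}, …, t^{π r})` the kernel vanishes except at `π = id`. -/
lemma coeff_dysonKernel (hinj : Function.Injective fun n : ℕ => t ^ n) (r : ℕ) :
    (dysonKernel t (r + 1)).coeff (Finsupp.equivFunOnFinite.symm fun _ => r) =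
      (-1) ^ (r + 1).choose 2 * ∏ k ∈ Finset.range (r + 1), (1 - t ^ (k + 1)) / (1 - t) := by
  have hv : Function.Injective fun a : Fin (r + 1) => t ^ (a : ℕ) :=
    hinj.comp Fin.val_injective
  have h := coeff_eq_sum_nodalWeight_mul_eval (σ := Fin (r + 1)) hv (f := dysonKernel t (r + 1))
    (by simpa using isHomogeneous_dysonKernel t r)
  rw [Fintype.card_fin, Nat.add_sub_cancel] at h
  rw [h, Finset.sum_eq_single id _ (by simp), ← prod_nodalWeight_mul_eval_dysonKernel hinj]
  · rfl
  intro π _ hπ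
  contrapose! hπ
  have heval := right_ne_zero_of_mul hπ
  rw [eval_dysonKernel, Finset.prod_ne_zero_iff] at heval
  refine eq_id_of_forall_lt_ne fun i j hij => ?_
  have hfac := Finset.prod_ne_zero_iff.mp (heval i (Finset.mem_univ i)) j (Finset.mem_Ioi.mpr hij)
  refine ⟨fun h => hfac ?_, fun h => hfac ?_⟩
  · simp [h]
  · simp [h, pow_succ']

end Kernel

/-! ### Families of vertex operators -/

lemma monomial_cons {R : Type*} [CommSemiring R] {k : ℕ} (b : ℕ) (μ : Fin k →₀ ℕ) (a : R) :
    monomial (Finsupp.cons b μ) a = X 0 ^ b * rename Fin.succ (monomial μ a) := by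
  rw [rename_monomial, X_pow_eq_monomial, monomial_mul, one_mul]
  refine congr_arg (monomial · a) (Finsupp.ext fun i => ?_)
  cases i using Fin.cases with
  | zero => simp [Finsupp.mapDomain_of_notMem_range]
  | succ i => simp [Finsupp.mapDomain_apply (Fin.succ_injective k)]

lemma quadratic_mul_monomial_cons {R : Type*} [CommRing R] {k : ℕ} (t : R) (j : Fin k) (a : ℕ)
    (ν : Fin k →₀ ℕ) :
    (X 0 - X j.succ) * (X 0 - C t * X j.succ) * monomial (Finsupp.cons a ν) (1 : R) =
      monomial (Finsupp.cons (a + 2) ν) 1 -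
        (1 + t) • monomial (Finsupp.cons (a + 1) (ν + Finsupp.single j 1)) 1 +
        t • monomial (Finsupp.cons a (ν + Finsupp.single j 2)) 1 := by
  have hsingle : ∀ n : ℕ, monomial (ν + Finsupp.single j n) (1 : R) = monomial ν 1 * X j ^ n :=
    fun n => by rw [X_pow_eq_monomial, monomial_mul, mul_one]
  simp only [monomial_cons, hsingle, map_mul, map_pow, rename_X, smul_eq_C_mul, map_add,
    map_one]
  ring

/-- Linear operators `V s` on `A`, indexed by the exponent `s`, with the commutation rule of the
components of a vertex operator `X(z) = ∑ V_s z^s`: for `G(w) = ∑ G_n wⁿ`,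
`X(z) G(w) = (1 - w/z)(1 - t w/z) G(w) X(z)`, and `X(z) 1 = G(z)`. -/
structure IsVertexFamily {R A : Type*} [CommRing R] [CommRing A] [Algebra R A] (t : R)
    (G : ℤ → A) (V : ℤ → A →ₗ[R] A) : Prop where
  coeff_neg : ∀ n < 0, G n = 0
  coeff_zero : G 0 = 1
  apply_one : ∀ s, V s 1 = G s
  apply_mul : ∀ s n P, V s (G n * P) =
    G n * V s P - (1 + t) • (G (n - 1) * V (s + 1) P) + t • (G (n - 2) * V (s + 2) P)

/-- The element `V_{N-2(k-1)} ⋯ V_{N-2} V_N 1` obtained by applying `k` components of a vertex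
operator to `1`; the exponent drops by `2` in each step as the lattice part of the operator
changes the charge. -/
def vertexIter {R A : Type*} [CommRing R] [CommRing A] [Algebra R A] (V : ℤ → A →ₗ[R] A) (N : ℤ) :
    ℕ → A
  | 0 => 1
  | k + 1 => V (N - 2 * k) (vertexIter V N k)

namespace IsVertexFamily

variable {R A : Type*} [CommRing R] [CommRing A] [Algebra R A] {t : R} {G : ℤ → A}
  {V : ℤ → A →ₗ[R] A}

/-- Each factor `(z_0 - z_j)(z_0 - t z_j)` lets one factor `G (N - ν j)` enter the argument
of `V`. -/
lemma umbralEval_prod_quadratic_mul_monomial_cons (h : IsVertexFamily t G V) (N : ℤ) {k : ℕ}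
    (S : Finset (Fin k)) (a : ℕ) (ν : Fin k →₀ ℕ) :
    umbralEval (fun n => G (N - n))
        ((∏ j ∈ S, (X 0 - X j.succ) * (X 0 - C t * X j.succ)) * monomial (Finsupp.cons a ν) 1) =
      V (N - a - 2 * S.card) (∏ j ∈ S, G (N - ν j)) * ∏ j ∈ Sᶜ, G (N - ν j) := by
  induction S using Finset.induction_on generalizing a ν with
  | empty => simp [umbralEval_monomial, Fin.prod_univ_succ, h.apply_one]
  | insert j S hj ih =>
    have hin : ∀ n : ℕ, ∏ i ∈ S, G (N - (ν + Finsupp.single j n) i) = ∏ i ∈ S, G (N - ν i) :=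
      fun n => Finset.prod_congr rfl fun i hi => by
        simp [Finsupp.single_eq_of_ne (ne_of_mem_of_not_mem hi hj)]
    have hout : ∀ n : ℕ, ∏ i ∈ Sᶜ, G (N - (ν + Finsupp.single j n) i) =
        G (N - ν j - n) * ∏ i ∈ (insert j S)ᶜ, G (N - ν i) := fun n => by
      rw [Finset.compl_insert, ← Finset.mul_prod_erase _ _ (Finset.mem_compl.mpr hj)]
      congr 1
      · simp [sub_sub]
      · exact Finset.prod_congr rfl fun i hi => by
          simp [Finsupp.single_eq_of_ne (Finset.ne_of_mem_erase hi)]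
    have hout_zero : ∏ i ∈ Sᶜ, G (N - ν i) = G (N - ν j) * ∏ i ∈ (insert j S)ᶜ, G (N - ν i) := by
      simpa using hout 0
    rw [Finset.prod_insert hj, Finset.prod_insert hj, Finset.card_insert_of_notMem hj, h.apply_mul,
      mul_right_comm, mul_comm, quadratic_mul_monomial_cons,
      mul_add, mul_sub, mul_smul_comm, mul_smul_comm, map_add, map_sub, map_smul, map_smul]
    simp only [ih, hin, hout, hout_zero]
    push_cast
    rw [show N - a - 2 * (S.card + 1) + 1 = N - (a + 1) - 2 * S.card by ring,
      show N - a - 2 * (S.card + 1) + 2 = N - a - 2 * S.card by ring,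
      show N - a - 2 * (S.card + 1) = N - (a + 2) - 2 * (S.card : ℤ) by ring]
    simp only [Algebra.smul_def]
    ring

lemma apply_umbralEval (h : IsVertexFamily t G V) (N : ℤ) {k : ℕ} (f : MvPolynomial (Fin k) R) :
    V (N - 2 * k) (umbralEval (fun n => G (N - n)) f) =
      umbralEval (fun n => G (N - n))
        ((∏ j : Fin k, (X 0 - X j.succ) * (X 0 - C t * X j.succ)) * rename Fin.succ f) := by
  induction f using MvPolynomial.induction_on' with
  | monomial ν a =>
    have hν := h.umbralEval_prod_quadratic_mul_monomial_cons N Finset.univ 0 ν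
    rw [monomial_cons] at hν
    have ha : (monomial ν a : MvPolynomial (Fin k) R) = a • monomial ν 1 := by
      simp [smul_monomial]
    simpa [ha, umbralEval_monomial] using congr_arg (a • ·) hν.symm
  | add p q hp hq => simp only [map_add, mul_add, hp, hq]

lemma vertexIter_eq_umbralEval (h : IsVertexFamily t G V) (N : ℤ) (k : ℕ) :
    vertexIter V N k = umbralEval (fun n => G (N - n)) (dysonKernel t k) := by
  induction k with
  | zero => simpa [vertexIter, dysonKernel] using (umbralEval_monomial (σ := Fin 0)
      (fun n => G (N - n)) 0 (1 : R)).symm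
  | succ k ih => rw [vertexIter, ih, h.apply_umbralEval, ← dysonKernel_succ]

end IsVertexFamily

/-- At the exponent `N = r - 1` only the central coefficient of the kernel survives. -/
lemma IsVertexFamily.vertexIter_sub_one {K A : Type*} [Field K] [CommRing A] [Algebra K A] {t : K}
    {G : ℤ → A} {V : ℤ → A →ₗ[K] A} (h : IsVertexFamily t G V)
    (hinj : Function.Injective fun n : ℕ => t ^ n) (r : ℕ) :
    vertexIter V (r - 1) r =
      ((-1) ^ r.choose 2 * ∏ k ∈ Finset.range r, (1 - t ^ (k + 1)) / (1 - t)) • (1 : A) := by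
  rcases r with _ | r
  · simp [vertexIter]
  rw [h.vertexIter_eq_umbralEval, umbralEval_of_isHomogeneous (N := r) (by simp [h.coeff_zero])
    (Or.inr fun n hn => h.coeff_neg _ (by push_cast; omega))
    (by simpa using isHomogeneous_dysonKernel t r), coeff_dysonKernel hinj]

/-! ### Translations -/

section Translation

/-- The chain rule, modulo an ideal that absorbs all but finitely many of its terms. -/
lemma derivation_algHom_sub_sum_pderiv_mem {σ R B : Type*} [CommRing R] [CommRing B] [Algebra R B]
    (φ : MvPolynomial σ R →ₐ[R] B) (D : Derivation R B B) {I : Ideal B} {s : Finset σ}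
    (hs : ∀ n ∉ s, D (φ (X n)) ∈ I) (P : MvPolynomial σ R) :
    D (φ P) - ∑ n ∈ s, φ (pderiv n P) * D (φ (X n)) ∈ I := by
  classical
  induction P using MvPolynomial.induction_on with
  | C a => simp [algHom_C]
  | add P Q hP hQ =>
    convert I.add_mem hP hQ using 1
    simp only [map_add, add_mul, Finset.sum_add_distrib]
    ring
  | mul_X P n hP =>
    have hX : D (φ (X n)) - ∑ m ∈ s, φ (pderiv m (X n)) * D (φ (X m)) ∈ I := by
      by_cases hn : n ∈ s
      · simp [pderiv_X, Pi.single_apply, apply_ite φ, hn]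
      · simpa [pderiv_X, Pi.single_apply, apply_ite φ, hn] using hs n hn
    convert I.add_mem (I.mul_mem_left (φ (X n)) hP) (I.mul_mem_left (φ P) hX) using 1
    simp only [map_mul, Derivation.leibniz, smul_eq_mul, map_add, add_mul, mul_sub,
      Finset.sum_add_distrib, Finset.mul_sum, mul_assoc]
    ring

variable {R : Type*} [CommRing R]

/-- The translation `p_n ↦ p_n + d_n uⁿ`, as an algebra map `R[p₁,p₂,…] → R[p₁,p₂,…][u]`. -/
def shiftHom (d : ℕ → R) : MvPolynomial ℕ+ R →ₐ[R] Polynomial (MvPolynomial ℕ+ R) :=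
  aeval fun n : ℕ+ => Polynomial.C (X n) + Polynomial.C (C (d n)) * Polynomial.X ^ (n : ℕ)

@[simp]
lemma shiftHom_X (d : ℕ → R) (n : ℕ+) :
    shiftHom d (X n) =
      Polynomial.C (X n) + Polynomial.C (C (d n)) * Polynomial.X ^ (n : ℕ) := by
  simp [shiftHom]

@[simp]
lemma shiftHom_C (d : ℕ → R) (a : R) : shiftHom d (C a) = Polynomial.C (C a) := by
  simp [shiftHom]

lemma shiftHom_coeff_zero (d : ℕ → R) (P : MvPolynomial ℕ+ R) : (shiftHom d P).coeff 0 = P := by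
  have h : (Polynomial.constantCoeff.comp (shiftHom d : MvPolynomial ℕ+ R →+* _)) =
      RingHom.id _ :=
    ringHom_ext (fun a => by simp) fun n => by simp [n.ne_zero.symm]
  exact RingHom.congr_fun h P

lemma natDegree_shiftHom_le (d : ℕ → Fq) (P : LamF) : (shiftHom d P).natDegree ≤ wboundF P := by
  conv_lhs => rw [P.as_sum, map_sum]
  refine Polynomial.natDegree_sum_le_of_forall_le _ _ fun α hα => ?_
  have hα_le : (α.sum fun i k => (i : ℕ) * k) ≤ wboundF P :=
    Finset.le_sup (f := fun α : ℕ+ →₀ ℕ => α.sum fun i k => (i : ℕ) * k) hα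
  have hX : ∀ i : ℕ+, (shiftHom d (X i)).natDegree ≤ i := fun i => by
    rw [shiftHom_X]
    exact Polynomial.natDegree_add_le_of_degree_le (by simp)
      (Polynomial.natDegree_C_mul_X_pow_le _ _)
  rw [monomial_eq, map_mul, shiftHom_C, Finsupp.prod, map_prod]
  calc _ ≤ ∑ i ∈ α.support, (shiftHom d (X i ^ α i)).natDegree :=
        (Polynomial.natDegree_C_mul_le _ _).trans (Polynomial.natDegree_prod_le _ _)
    _ ≤ α.sum fun i k => (i : ℕ) * k := Finset.sum_le_sum fun i _ => by
        rw [map_pow]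
        exact (Polynomial.natDegree_pow_le_of_le _ (hX i)).trans_eq (mul_comm _ _)
    _ ≤ wboundF P := hα_le

lemma derivative_shiftHom_X (d : ℕ → R) (i : ℕ) :
    Polynomial.derivative (shiftHom d (X i.succPNat)) =
      Polynomial.C (C ((i + 1) * d (i + 1))) * Polynomial.X ^ i := by
  simp only [shiftHom_X, Nat.succPNat_coe, Nat.succ_eq_add_one, map_add, Polynomial.derivative_C,
    Polynomial.derivative_C_mul_X_pow, Nat.add_sub_cancel, zero_add, C_mul]
  simp only [map_mul, map_add, map_natCast, map_one, Nat.cast_add, Nat.cast_one, mul_comm]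

/-- The coefficients of `d/du (shiftHom d P) = ∑ (i+1) d_{i+1} uⁱ shiftHom d (∂P/∂p_{i+1})`. -/
lemma shiftHom_coeff_succ (d : ℕ → R) (k : ℕ) (P : MvPolynomial ℕ+ R) :
    ((k : R) + 1) • (shiftHom d P).coeff (k + 1) = ∑ i ∈ Finset.range (k + 1),
      (((i : R) + 1) * d (i + 1)) • (shiftHom d (pderiv i.succPNat P)).coeff (k - i) := by
  have h := derivation_algHom_sub_sum_pderiv_mem (shiftHom d)
    (Polynomial.derivative'.restrictScalars R) (I := Ideal.span {Polynomial.X ^ (k + 1)})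
    (s := (Finset.range (k + 1)).map ⟨Nat.succPNat, Nat.succPNat_injective⟩) (fun n hn => by
      obtain ⟨i, rfl⟩ : ∃ i : ℕ, n = i.succPNat := ⟨n.natPred, (PNat.succPNat_natPred n).symm⟩
      have hi : k + 1 ≤ i := by simpa [Nat.succPNat_inj] using hn
      change Polynomial.derivative _ ∈ _
      rw [derivative_shiftHom_X]
      exact Ideal.mul_mem_left _ _ (Ideal.mem_span_singleton.mpr (pow_dvd_pow _ hi))) P
  rw [Ideal.mem_span_singleton, Polynomial.X_pow_dvd_iff] at h
  replace h := h k k.lt_succ_self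
  rw [Polynomial.coeff_sub, sub_eq_zero, Finset.sum_map, Polynomial.finsetSum_coeff] at h
  calc ((k : R) + 1) • (shiftHom d P).coeff (k + 1)
      = (Polynomial.derivative (shiftHom d P)).coeff k := by
        rw [Polynomial.coeff_derivative, smul_eq_C_mul]
        simp [mul_comm]
    _ = _ := h
    _ = _ := Finset.sum_congr rfl fun i hi => by
        change (_ * Polynomial.derivative _).coeff k = _
        rw [Function.Embedding.coeFn_mk, derivative_shiftHom_X, mul_left_comm,
          Polynomial.coeff_C_mul, Polynomial.coeff_mul_X_pow', if_pos (by grind), smul_eq_C_mul]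

end Translation

/-! ### The operators `f(∂)` -/

section DifferentialOperators

open scoped IsMulCommutative

lemma pderiv_pderiv_comm {σ R : Type*} [CommRing R] (i j : σ) (P : MvPolynomial σ R) :
    pderiv i (pderiv j P) = pderiv j (pderiv i P) := by
  classical
  have h : ⁅pderiv (R := R) i, pderiv j⁆ =
      (0 : Derivation R (MvPolynomial σ R) (MvPolynomial σ R)) := derivation_ext fun k => by
    rw [Derivation.commutator_apply, pderiv_X, pderiv_X, Pi.single_apply, Pi.single_apply]
    split_ifs <;> simp
  simpa [Derivation.commutator_apply, sub_eq_zero] using DFunLike.congr_fun h P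

/-- The operator `i·∂/∂p_i` on `Λ_F`, adjoint to multiplication by `p_i` for the Hall inner
product. -/
def powerSumAdjoint (i : ℕ+) : Module.End Fq LamF := ((i : ℕ) : Fq) • (pderiv i).toLinearMap

lemma powerSumAdjoint_apply (i : ℕ+) (P : LamF) :
    powerSumAdjoint i P = ((i : ℕ) : Fq) • pderiv i P :=
  rfl

lemma powerSumAdjoint_comm (i j : ℕ+) :
    powerSumAdjoint i * powerSumAdjoint j = powerSumAdjoint j * powerSumAdjoint i := by
  refine LinearMap.ext fun P => ?_
  simp only [Module.End.mul_apply, powerSumAdjoint_apply, map_smul, pderiv_pderiv_comm i j]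
  rw [smul_comm]

/-- The commutative algebra generated by the operators `i·∂/∂p_i`. Working in it makes `f ↦ f(∂)`
an algebra map out of the polynomial ring. -/
abbrev PowerSumAdjointAlg : Subalgebra Fq (Module.End Fq LamF) :=
  Algebra.adjoin Fq (Set.range powerSumAdjoint)

instance : IsMulCommutative PowerSumAdjointAlg := Algebra.isMulCommutative_adjoin Fq (by
  rintro _ ⟨i, rfl⟩ _ ⟨j, rfl⟩
  exact powerSumAdjoint_comm i j)

/-- The substitution `f ↦ f(∂)`, that is `p_i ↦ i·∂/∂p_i`, as an algebra map. -/
def adjointHom : LamF →ₐ[Fq] PowerSumAdjointAlg :=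
  aeval fun i => ⟨powerSumAdjoint i, Algebra.subset_adjoin ⟨i, rfl⟩⟩

@[simp]
lemma coe_adjointHom_X (i : ℕ+) :
    (adjointHom (X i) : Module.End Fq LamF) = powerSumAdjoint i := by
  simp [adjointHom]

lemma coe_adjointHom_monomial (α : ℕ+ →₀ ℕ) (a : Fq) :
    (adjointHom (monomial α a) : Module.End Fq LamF) = a • monOpF α := by
  have hprod : (α.prod fun i k => adjointHom (X i) ^ k : PowerSumAdjointAlg) =
      ((α.support.sort (· ≤ ·)).map fun i => adjointHom (X i) ^ α i).prod := by
    rw [Finsupp.prod, ← Finset.prod_map_toList]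
    exact ((Finset.sort_perm_toList _ _).symm.map _).prod_eq
  have hmonOp : (α.prod fun i k => adjointHom (X i) ^ k : PowerSumAdjointAlg) =
      (monOpF α : Module.End Fq LamF) := by
    rw [hprod, ← Subalgebra.coe_val, map_list_prod, List.map_map, monOpF]
    simp [Function.comp_def, powerSumAdjoint]
  rw [monomial_eq, ← smul_eq_C_mul, map_smul, ← hmonOp, Finsupp.prod, map_prod]
  simp [Finsupp.prod]

lemma DopF_eq_adjointHom (f P : LamF) : DopF f P = (adjointHom f : Module.End Fq LamF) P := by
  conv_rhs => rw [f.as_sum, map_sum]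
  simp [DopF, coe_adjointHom_monomial]

@[simp]
lemma genFamF_zero (c : ℕ → Fq) : genFamF c 0 = 1 := by
  rw [genFamF]

lemma genFamF_succ (c : ℕ → Fq) (k : ℕ) :
    ((k : Fq) + 1) • genFamF c (k + 1) =
      ∑ i ∈ Finset.range (k + 1), c (i + 1) • (X i.succPNat * genFamF c (k - i)) := by
  rw [genFamF, smul_inv_smul₀ (by exact_mod_cast k.succ_ne_zero)]
  rfl

/-- Taylor's formula: `exp (∑ d_n uⁿ ∂/∂p_n)` is the translation `p_n ↦ p_n + d_n uⁿ`. -/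
lemma DopF_genFamF (d : ℕ → Fq) (k : ℕ) (P : LamF) :
    DopF (genFamF d k) P = (shiftHom d P).coeff k := by
  induction k using Nat.strong_induction_on generalizing P with
  | _ k ih =>
    rcases k with _ | k
    · simp [DopF_eq_adjointHom, shiftHom_coeff_zero]
    have hk : ((k : Fq) + 1) ≠ 0 := by exact_mod_cast k.succ_ne_zero
    have hsum : ((k : Fq) + 1) • DopF (genFamF d (k + 1)) P = ∑ i ∈ Finset.range (k + 1),
        d (i + 1) • DopF (genFamF d (k - i)) (powerSumAdjoint i.succPNat P) := by
      have h := congr_arg (fun f => (adjointHom f : Module.End Fq LamF) P) (genFamF_succ d k)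
      simpa [DopF_eq_adjointHom, mul_comm (X _ : LamF)] using h
    rw [← smul_right_inj hk, hsum, shiftHom_coeff_succ]
    refine Finset.sum_congr rfl fun i _ => ?_
    rw [ih _ (by omega), powerSumAdjoint_apply, map_smul, Polynomial.coeff_smul, smul_smul,
      mul_comm]
    simp

end DifferentialOperators

/-! ### Translating the generating series -/

section GeneratingSeries

open PowerSeries (derivative)

section LogarithmicDerivative

variable {R : Type*} [CommRing R] {A B F G : PowerSeries R}

lemma eq_of_derivative_eq_mul [IsAddTorsionFree R] (hF : derivative R F = A * F)
    (hG : derivative R G = A * G) (h0 : F.constantCoeff = G.constantCoeff) : F = G := by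
  ext n
  induction n using Nat.strong_induction_on with
  | _ n ih =>
    rcases n with _ | n
    · simpa using h0
    have hcoeff : (derivative R F).coeff n = (derivative R G).coeff n := by
      rw [hF, hG, PowerSeries.coeff_mul, PowerSeries.coeff_mul]
      exact Finset.sum_congr rfl fun p hp => by
        rw [ih p.2 (by have := Finset.HasAntidiagonal.mem_antidiagonal.mp hp; omega)]
    rw [PowerSeries.coeff_derivative, PowerSeries.coeff_derivative, ← Nat.cast_succ,
      ← nsmul_eq_mul', ← nsmul_eq_mul'] at hcoeff
    exact nsmul_right_injective n.succ_ne_zero hcoeff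

lemma derivative_mul_eq_add_mul (hF : derivative R F = A * F) (hG : derivative R G = B * G) :
    derivative R (F * G) = (A + B) * (F * G) := by
  rw [Derivation.leibniz, hF, hG, smul_eq_mul, smul_eq_mul]
  ring

lemma derivative_one_sub_C_mul_X (s : R) :
    derivative R (1 - PowerSeries.C s * PowerSeries.X) =
      -PowerSeries.mk (fun i => s ^ (i + 1)) * (1 - PowerSeries.C s * PowerSeries.X) := by
  have hgeom : PowerSeries.mk (fun i => s ^ (i + 1)) * (1 - PowerSeries.C s * PowerSeries.X) =
      PowerSeries.C s := by
    ext (_ | k)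
    · simp
    · rw [mul_sub, mul_one, mul_left_comm, map_sub, PowerSeries.coeff_C_mul,
        PowerSeries.coeff_succ_mul_X]
      simp [pow_succ']
  rw [neg_mul, hgeom]
  simp

end LogarithmicDerivative

/-- The coefficient of `zⁿ` in a power series, for an integer `n`. -/
def coeffInt {R : Type*} [Semiring R] (n : ℤ) : PowerSeries R →ₗ[R] R :=
  if 0 ≤ n then PowerSeries.coeff n.toNat else 0

section CoeffInt

variable {R S : Type*} [Semiring R] [Semiring S]

lemma coeffInt_apply (n : ℤ) (F : PowerSeries R) :
    coeffInt n F = if 0 ≤ n then F.coeff n.toNat else 0 := by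
  rw [coeffInt]
  split_ifs <;> simp

lemma coeffInt_C_mul (n : ℤ) (a : R) (F : PowerSeries R) :
    coeffInt n (PowerSeries.C a * F) = a * coeffInt n F := by
  rw [← PowerSeries.smul_eq_C_mul, map_smul, smul_eq_mul]

lemma coeffInt_X_mul (n : ℤ) (F : PowerSeries R) :
    coeffInt n (PowerSeries.X * F) = coeffInt (n - 1) F := by
  rcases n with (_ | n) | n
  · simp [coeffInt_apply]
  · simp [coeffInt_apply, PowerSeries.coeff_succ_X_mul, show ¬((n : ℤ) + 1 < 0) by omega]
  · rw [coeffInt_apply, coeffInt_apply, if_neg (by omega), if_neg (by omega)]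

lemma coeffInt_map (φ : R →+* S) (n : ℤ) (F : PowerSeries R) :
    coeffInt n (F.map φ) = φ (coeffInt n F) := by
  simp [coeffInt_apply, apply_ite φ]

end CoeffInt

/-- The generating series `G(z) = exp (∑ c_n p_n zⁿ/n)` of the family `genFamF c`. -/
def genSeries (c : ℕ → Fq) : PowerSeries LamF := PowerSeries.mk (genFamF c)

/-- The family `genFamF c`, extended by zero to negative indices. -/
def genFamZ (c : ℕ → Fq) (n : ℤ) : LamF := coeffInt n (genSeries c)

@[simp]
lemma constantCoeff_map_genSeries {R : Type*} [CommRing R] (φ : LamF →+* R) (c : ℕ → Fq) :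
    ((genSeries c).map φ).constantCoeff = 1 := by
  rw [← PowerSeries.coeff_zero_eq_constantCoeff_apply, PowerSeries.coeff_map, genSeries,
    PowerSeries.coeff_mk, genFamF_zero, map_one]

lemma derivative_map_genSeries {R : Type*} [CommRing R] (φ : LamF →+* R) (c : ℕ → Fq) :
    derivative R ((genSeries c).map φ) =
      PowerSeries.mk (fun i => φ (c (i + 1) • X i.succPNat)) * (genSeries c).map φ := by
  ext k
  have h := congr_arg φ (genFamF_succ c k)
  simp only [smul_eq_C_mul, map_mul, map_add, map_natCast, map_one, map_sum] at h
  simp only [PowerSeries.coeff_derivative, PowerSeries.coeff_mul, PowerSeries.coeff_map,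
    genSeries, PowerSeries.coeff_mk, Finset.Nat.sum_antidiagonal_eq_sum_range_succ_mk,
    smul_eq_C_mul, map_mul, mul_assoc]
  rw [mul_comm, h]

variable {c d : ℕ → Fq} {t : Fq}

/-- This is the identity `exp (-∑ (1 + tⁿ)(uz)ⁿ/n) = (1 - uz)(1 - tuz)`, obtained by comparing
logarithmic derivatives. -/
lemma map_shiftHom_genSeries (hcd : ∀ n, c (n + 1) * d (n + 1) = -(1 + t ^ (n + 1))) :
    (genSeries c).map (shiftHom d : LamF →+* Polynomial LamF) =
      (1 - PowerSeries.C Polynomial.X * PowerSeries.X) *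
        (1 - PowerSeries.C (Polynomial.C (C t) * Polynomial.X) * PowerSeries.X) *
          (genSeries c).map Polynomial.C := by
  refine eq_of_derivative_eq_mul (derivative_map_genSeries _ c) ?_ (by simp)
  rw [derivative_mul_eq_add_mul (derivative_mul_eq_add_mul (derivative_one_sub_C_mul_X _)
    (derivative_one_sub_C_mul_X _)) (derivative_map_genSeries _ c)]
  congr 1
  ext1 i
  have hi := congr_arg (fun a => Polynomial.C (C a : LamF)) (hcd i)
  simp only [map_mul, map_neg, map_add, map_one, map_pow] at hi
  simp only [map_add, map_neg, PowerSeries.coeff_mk, smul_eq_C_mul, map_mul, RingHom.coe_coe,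
    shiftHom_C, shiftHom_X, Nat.succPNat_coe, Nat.succ_eq_add_one]
  linear_combination (-Polynomial.X ^ (i + 1)) * hi

lemma shiftHom_genFamZ (hcd : ∀ n, c (n + 1) * d (n + 1) = -(1 + t ^ (n + 1))) (n : ℤ) :
    shiftHom d (genFamZ c n) = Polynomial.C (genFamZ c n) -
      Polynomial.C (C (1 + t)) * Polynomial.X * Polynomial.C (genFamZ c (n - 1)) +
      Polynomial.C (C t) * Polynomial.X ^ 2 * Polynomial.C (genFamZ c (n - 2)) := by
  have h := congr_arg (coeffInt n) (map_shiftHom_genSeries hcd)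
  have hexpand : ∀ (a b : Polynomial LamF) (F : PowerSeries (Polynomial LamF)),
      (1 - PowerSeries.C a * PowerSeries.X) * (1 - PowerSeries.C b * PowerSeries.X) * F =
        F - PowerSeries.C (a + b) * (PowerSeries.X * F) +
          PowerSeries.C (a * b) * (PowerSeries.X * (PowerSeries.X * F)) := fun a b F => by
    simp only [map_add, map_mul]
    ring
  rw [hexpand, map_add, map_sub, coeffInt_C_mul, coeffInt_C_mul, coeffInt_X_mul, coeffInt_X_mul,
    coeffInt_X_mul, coeffInt_map, coeffInt_map, coeffInt_map, coeffInt_map,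
    sub_sub n 1 1] at h
  refine h.trans ?_
  simp only [genFamZ, map_add, map_one, one_add_one_eq_two]
  ring

end GeneratingSeries

/-! ### The vertex operators on `Λ_F` -/

/-- The coefficient of `z^s` in `G(z) p(z⁻¹)`, for a Laurent series `G(z) = ∑ G_n zⁿ`. -/
def laurentPairing {A : Type*} [CommSemiring A] (G : ℤ → A) (s : ℤ) : Polynomial A →ₗ[A] A :=
  Polynomial.lsum fun j => LinearMap.mulLeft A (G (s + j))

lemma laurentPairing_mul_X_pow {A : Type*} [CommSemiring A] (G : ℤ → A) (s : ℤ) (p : Polynomial A)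
    (i : ℕ) : laurentPairing G s (p * Polynomial.X ^ i) = laurentPairing G (s + i) p := by
  induction p using Polynomial.induction_on' with
  | add p q hp hq => simp only [add_mul, map_add, hp, hq]
  | monomial n a =>
    simp [laurentPairing, Polynomial.monomial_mul_X_pow, Polynomial.sum_monomial_index, add_assoc,
      add_comm (i : ℤ)]

/-- The component of `z^s` in the vertex operator
`exp (∑ c_n p_n zⁿ/n) · exp (∑ d_n z⁻ⁿ ∂/∂p_n)` on `Λ_F`. -/
def vertexOp (c d : ℕ → Fq) (s : ℤ) : LamF →ₗ[Fq] LamF :=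
  (laurentPairing (genFamZ c) s).restrictScalars Fq ∘ₗ (shiftHom d).toLinearMap

lemma vertexOp_apply (c d : ℕ → Fq) (s : ℤ) (P : LamF) :
    vertexOp c d s P = laurentPairing (genFamZ c) s (shiftHom d P) :=
  rfl

lemma vertexOp_eq_sum (c d : ℕ → Fq) (s : ℤ) (P : LamF) :
    vertexOp c d s P =
      ∑ j ∈ Finset.range (wboundF P + 1), genFamZ c (s + j) * DopF (genFamF d j) P := by
  simp only [DopF_genFamF]
  exact Polynomial.sum_over_range' _ (by simp) _ (Nat.lt_succ_of_le (natDegree_shiftHom_le d P))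

lemma isVertexFamily_vertexOp {c d : ℕ → Fq} {t : Fq}
    (hcd : ∀ n, c (n + 1) * d (n + 1) = -(1 + t ^ (n + 1))) :
    IsVertexFamily t (genFamZ c) (vertexOp c d) where
  coeff_neg n hn := by rw [genFamZ, coeffInt_apply, if_neg hn.not_ge]
  coeff_zero := by simp [genFamZ, coeffInt_apply, genSeries]
  apply_one s := by
    rw [vertexOp_apply, map_one, ← Polynomial.C_1, laurentPairing, Polynomial.lsum_apply,
      Polynomial.sum_C_index (by simp)]
    simp
  apply_mul s n P := by
    have hexpand : shiftHom d (genFamZ c n * P) = genFamZ c n • shiftHom d P -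
        (1 + t) • genFamZ c (n - 1) • (shiftHom d P * Polynomial.X ^ 1) +
        t • genFamZ c (n - 2) • (shiftHom d P * Polynomial.X ^ 2) := by
      rw [map_mul, shiftHom_genFamZ hcd]
      simp only [Algebra.smul_def, Polynomial.algebraMap_apply, algebraMap_eq,
        Algebra.algebraMap_self_apply]
      ring
    rw [vertexOp_apply, hexpand]
    simp only [map_add, map_sub, map_smul, LinearMap.map_smul_of_tower, laurentPairing_mul_X_pow,
      vertexOp_apply, smul_eq_mul, Nat.cast_one, Nat.cast_ofNat]

/-! ### `q`-factorials and triangular numbers -/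

lemma qq_ne_zero : qq ≠ 0 := RatFunc.X_ne_zero

lemma qq_pow_injective : Function.Injective fun n : ℕ => qq ^ n := fun m n h => by
  have hX : (Polynomial.X ^ m : Polynomial ℚ) = Polynomial.X ^ n :=
    RatFunc.algebraMap_injective ℚ (by simpa [qq] using h)
  simpa using congr_arg Polynomial.natDegree hX

lemma qq_sq_pow_injective : Function.Injective fun n : ℕ => (qq ^ 2) ^ n := fun m n h => by
  simp only [← pow_mul] at h
  exact Nat.eq_of_mul_eq_mul_left two_pos (qq_pow_injective h)

lemma inv_qq_sq_pow_injective : Function.Injective fun n : ℕ => (qq⁻¹ ^ 2) ^ n := fun m n h => by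
  simp only [inv_pow, inv_inj] at h
  exact qq_sq_pow_injective h

lemma pow_sub_inv_pow {K : Type*} [Field K] {x : K} (hx : x ≠ 0) (n : ℕ) :
    x ^ n - x⁻¹ ^ n = -(x⁻¹ ^ n * (1 - (x ^ 2) ^ n)) := by
  have h : x⁻¹ ^ n * x ^ n = 1 := by rw [← mul_pow, inv_mul_cancel₀ hx, one_pow]
  rw [← pow_mul', pow_mul]
  linear_combination (-x ^ n) * h

lemma qfact_ne_zero (r : ℕ) : qfact r ≠ 0 := by
  have h : ∀ n : ℕ, qq ^ (n + 1) - qq⁻¹ ^ (n + 1) ≠ 0 := fun n => by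
    rw [pow_sub_inv_pow qq_ne_zero, neg_ne_zero]
    refine mul_ne_zero (pow_ne_zero _ (inv_ne_zero qq_ne_zero)) (sub_ne_zero.mpr ?_)
    simpa using qq_sq_pow_injective.ne n.succ_ne_zero.symm
  exact Finset.prod_ne_zero_iff.mpr fun n _ => div_ne_zero (h n) (by simpa using h 0)

lemma prod_one_sub_sq_pow_div {K : Type*} [Field K] {x : K} (hx : x ≠ 0) (r : ℕ) :
    ∏ k ∈ Finset.range r, (1 - (x ^ 2) ^ (k + 1)) / (1 - x ^ 2) =
      x ^ r.choose 2 * ∏ k ∈ Finset.range r, (x ^ (k + 1) - x⁻¹ ^ (k + 1)) / (x - x⁻¹) := by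
  have hsub : x - x⁻¹ = -(x⁻¹ * (1 - x ^ 2)) := by simpa using pow_sub_inv_pow hx 1
  have hfactor : ∀ k, (1 - (x ^ 2) ^ (k + 1)) / (1 - x ^ 2) =
      x ^ k * ((x ^ (k + 1) - x⁻¹ ^ (k + 1)) / (x - x⁻¹)) := fun k => by
    rw [pow_sub_inv_pow hx, hsub, neg_div_neg_eq, pow_succ x⁻¹, mul_comm (x⁻¹ ^ k), mul_assoc,
      mul_div_mul_left _ _ (inv_ne_zero hx), mul_div_assoc, ← mul_assoc, ← mul_pow,
      mul_inv_cancel₀ hx, one_pow, one_mul]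
  simp only [hfactor, Finset.prod_mul_distrib]
  rw [Finset.prod_pow_eq_pow_sum, Finset.sum_range_id, Nat.choose_two_right]

lemma prod_one_sub_qq_sq_pow_div (r : ℕ) :
    ∏ k ∈ Finset.range r, (1 - (qq ^ 2) ^ (k + 1)) / (1 - qq ^ 2) = qq ^ r.choose 2 * qfact r :=
  prod_one_sub_sq_pow_div qq_ne_zero r

lemma prod_one_sub_inv_qq_sq_pow_div (r : ℕ) :
    ∏ k ∈ Finset.range r, (1 - (qq⁻¹ ^ 2) ^ (k + 1)) / (1 - qq⁻¹ ^ 2) =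
      qq⁻¹ ^ r.choose 2 * qfact r := by
  rw [prod_one_sub_sq_pow_div (inv_ne_zero qq_ne_zero), qfact]
  refine congr_arg _ (Finset.prod_congr rfl fun k _ => ?_)
  rw [inv_inv, ← neg_sub, ← neg_sub qq, neg_div_neg_eq]

lemma choose_two_two_mul (m : ℕ) : (2 * m).choose 2 = m * (2 * m - 1) := by
  rw [Nat.choose_two_right, mul_assoc, Nat.mul_div_cancel_left _ two_pos]

lemma choose_two_two_mul_add_one (m : ℕ) : (2 * m + 1).choose 2 = m * (2 * m + 1) := by
  rw [Nat.choose_two_right, Nat.add_sub_cancel, mul_comm, mul_assoc,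
    Nat.mul_div_cancel_left _ two_pos]

lemma cast_choose_two_two_mul (m : ℕ) : ((2 * m).choose 2 : ℤ) = m * (2 * m - 1) := by
  rcases m with _ | m
  · simp
  · rw [choose_two_two_mul, Nat.cast_mul, Nat.cast_sub (by omega)]
    push_cast
    rfl

lemma neg_one_pow_choose_two_two_mul {R : Type*} [Monoid R] [HasDistribNeg R] (m : ℕ) :
    (-1 : R) ^ (2 * m).choose 2 = (-1) ^ m := by
  rw [choose_two_two_mul]
  exact neg_one_pow_congr (by grind)

lemma neg_one_pow_choose_two_two_mul_add_one {R : Type*} [Monoid R] [HasDistribNeg R]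
    (m : ℕ) : (-1 : R) ^ (2 * m + 1).choose 2 = (-1) ^ m := by
  rw [choose_two_two_mul_add_one]
  exact neg_one_pow_congr (by grind)

/-! ### The operators `f₀` and `f₁` -/

/-- The coefficients `c_n` in the creation part `exp (∑ c_n p_n zⁿ/n)` of `X⁻(z)`. -/
def creationMinus (n : ℕ) : Fq := -(1 + qq ^ (2 * n))

/-- The coefficients `d_n` in the annihilation part `exp (∑ d_n z⁻ⁿ ∂/∂p_n)` of `X⁻(z)`. -/
def annihilationMinus (_ : ℕ) : Fq := 1

/-- The coefficients `c_n` in the creation part `exp (∑ c_n p_n zⁿ/n)` of `X⁺(z)`. -/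
def creationPlus (n : ℕ) : Fq := (1 + qq ^ (2 * n)) * qq⁻¹ ^ n

/-- The coefficients `d_n` in the annihilation part `exp (∑ d_n z⁻ⁿ ∂/∂p_n)` of `X⁺(z)`. -/
def annihilationPlus (n : ℕ) : Fq := -(qq⁻¹ ^ n)

lemma isVertexFamily_minus :
    IsVertexFamily (qq ^ 2) (genFamZ creationMinus) (vertexOp creationMinus annihilationMinus) :=
  isVertexFamily_vertexOp fun n => by rw [creationMinus, annihilationMinus, mul_one, pow_mul]

lemma isVertexFamily_plus :
    IsVertexFamily (qq⁻¹ ^ 2) (genFamZ creationPlus) (vertexOp creationPlus annihilationPlus) :=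
  isVertexFamily_vertexOp fun n => by
    have h : qq ^ (n + 1) * qq⁻¹ ^ (n + 1) = 1 := by
      rw [← mul_pow, mul_inv_cancel₀ qq_ne_zero, one_pow]
    rw [creationPlus, annihilationPlus, mul_comm 2, pow_mul, pow_right_comm]
    linear_combination (-(qq ^ (n + 1) * qq⁻¹ ^ (n + 1)) - 1) * h

lemma HZm_eq_genFamZ (n : ℤ) : HZm n = genFamZ creationMinus n := by
  simp only [HZm, HmF, genFamZ, coeffInt_apply, genSeries, PowerSeries.coeff_mk]
  rfl

lemma HZp_eq_genFamZ (n : ℤ) : HZp n = genFamZ creationPlus n := by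
  simp only [HZp, HpF, genFamZ, coeffInt_apply, genSeries, PowerSeries.coeff_mk]
  rfl

lemma chf1_single (i m : ℤ) (P : LamF) : chf1 i (Finsupp.single m P) =
    Finsupp.single (m - 1)
      (vertexOp creationMinus annihilationMinus (2 * m + i - 1) P) := by
  rw [chf1, Xm, Finsupp.sum_single_index (by simp [DopF]), vertexOp_eq_sum]
  refine congr_arg _ (Finset.sum_congr rfl fun j _ => ?_)
  rw [HZm_eq_genFamZ, show (j : ℤ) + 2 * m + i - 0 - 1 = 2 * m + i - 1 + j by ring]
  rfl

lemma chf0_single (i m : ℤ) (P : LamF) : chf0 i (Finsupp.single m P) =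
    qq ^ (2 * (m + 1) + i) • Finsupp.single (m + 1)
      (vertexOp creationPlus annihilationPlus (-2 * m - i) P) := by
  rw [chf0, Xp, Finsupp.sum_single_index (by simp [DopF]), qd, Finsupp.sum_single_index (by simp),
    one_mul, Finsupp.smul_single, vertexOp_eq_sum]
  refine congr_arg (fun Q => Finsupp.single _ (_ • Q)) (Finset.sum_congr rfl fun j _ => ?_)
  rw [HZp_eq_genFamZ, show (j : ℤ) - -1 - 1 - 2 * m - i = -2 * m - i + j by ring]
  rfl

lemma chf1_iterate (i m : ℤ) (k : ℕ) : (chf1 i)^[k] (Finsupp.single m 1) =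
    Finsupp.single (m - k)
      (vertexIter (vertexOp creationMinus annihilationMinus) (2 * m + i - 1) k) := by
  induction k with
  | zero => simp [vertexIter]
  | succ k ih =>
    rw [Function.iterate_succ_apply', ih, chf1_single, vertexIter, Nat.cast_succ, sub_sub,
      show 2 * (m - k) + i - 1 = 2 * m + i - 1 - 2 * (k : ℤ) by ring]

/-- The exponent of `q` collects the factors `q^{2(m+l)+i}`, `l = 1, …, k`, produced by `q^∂`. -/
lemma chf0_iterate (i m : ℤ) (k : ℕ) : (chf0 i)^[k] (Finsupp.single m 1) =
    qq ^ (k * (2 * m + i + k + 1)) • Finsupp.single (m + k)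
      (vertexIter (vertexOp creationPlus annihilationPlus) (-2 * m - i) k) := by
  induction k with
  | zero => simp [vertexIter]
  | succ k ih =>
    rw [Function.iterate_succ_apply', ih, Finsupp.smul_single, chf0_single, vertexIter, map_smul,
      ← Finsupp.smul_single, smul_smul, ← zpow_add₀ qq_ne_zero, Nat.cast_succ, add_assoc m,
      show -2 * (m + k) - i = -2 * m - i - 2 * (k : ℤ) by ring]
    ring_nf

/-- The condition on `m` says that the iterated vertex operator starts at the exponent `r - 1`. -/
lemma divpow_chf1 {i m : ℤ} {r : ℕ} (h : 2 * m + i = r) :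
    divpow (chf1 i) r (Finsupp.single m 1) =
      (-1 : Fq) ^ r.choose 2 • qq ^ (r.choose 2 : ℤ) • Finsupp.single (m - r) (1 : LamF) := by
  rw [divpow, chf1_iterate, h, isVertexFamily_minus.vertexIter_sub_one qq_sq_pow_injective,
    prod_one_sub_qq_sq_pow_div, ← Finsupp.smul_single, smul_smul, smul_smul, zpow_natCast]
  congr 1
  field_simp [qfact_ne_zero r]

/-- The condition on `m` says that the iterated vertex operator starts at the exponent `r - 1`; it
also makes the total contribution of `q^∂` equal to `q^{2r}`. -/
lemma divpow_chf0 {i m : ℤ} {r : ℕ} (h : -2 * m - i = r - 1) :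
    divpow (chf0 i) r (Finsupp.single m 1) = (-1 : Fq) ^ r.choose 2 •
      qq ^ (2 * r - r.choose 2 : ℤ) • Finsupp.single (m + r) (1 : LamF) := by
  have hq : qq ^ (2 * r - r.choose 2 : ℤ) =
      qq ^ (r * (2 * m + i + r + 1)) * qq⁻¹ ^ r.choose 2 := by
    rw [show 2 * m + i + r + 1 = 2 by linear_combination -h, zpow_sub₀ qq_ne_zero, zpow_natCast,
      inv_pow, div_eq_mul_inv, mul_comm (r : ℤ)]
  rw [divpow, chf0_iterate, h, isVertexFamily_plus.vertexIter_sub_one inv_qq_sq_pow_injective,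
    prod_one_sub_inv_qq_sq_pow_div, ← Finsupp.smul_single, smul_smul, smul_smul, smul_smul, hq]
  congr 1
  field_simp [qfact_ne_zero r]

/-- divided powers of `f₀` and `f₁` on lattice vectors
(`e^{mα} := 1 ⊗ e^{mα}` realized as `Finsupp.single m 1`): for all `m ≥ 0` (`m : ℕ`):
(a) in `W₀`: `f₁^{(2m)} e^{mα} = (−1)^m q^{m(2m−1)} e^{−mα}`;
(b) in `W₀`: `f₀^{(2m+1)} e^{−mα} = (−1)^m q^{−(2m+1)(m−2)} e^{(m+1)α}`;
(c) in `W₁`: `f₀^{(2m)} e^{−mα}e^{α/2} = (−1)^m q^{−m(2m−5)} e^{mα}e^{α/2}`;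
(d) in `W₁`: `f₁^{(2m+1)} e^{mα}e^{α/2} = (−1)^m q^{m(2m+1)} e^{−(m+1)α}e^{α/2}`. -/
theorem divided_powers_f_on_lattice_vectors (m : ℕ) :
    (divpow (chf1 0) (2*m) (Finsupp.single (m : ℤ) (1 : LamF))
      = ((-1 : Fq)) ^ m • qq ^ ((m : ℤ) * (2*(m : ℤ) - 1)) •
          Finsupp.single (-(m : ℤ)) (1 : LamF)) ∧
    (divpow (chf0 0) (2*m+1) (Finsupp.single (-(m : ℤ)) (1 : LamF))
      = ((-1 : Fq)) ^ m • qq ^ (-((2*(m : ℤ) + 1) * ((m : ℤ) - 2))) •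
          Finsupp.single ((m : ℤ) + 1) (1 : LamF)) ∧
    (divpow (chf0 1) (2*m) (Finsupp.single (-(m : ℤ)) (1 : LamF))
      = ((-1 : Fq)) ^ m • qq ^ (-((m : ℤ) * (2*(m : ℤ) - 5))) •
          Finsupp.single ((m : ℤ)) (1 : LamF)) ∧
    (divpow (chf1 1) (2*m+1) (Finsupp.single ((m : ℤ)) (1 : LamF))
      = ((-1 : Fq)) ^ m • qq ^ ((m : ℤ) * (2*(m : ℤ) + 1)) •
          Finsupp.single (-((m : ℤ) + 1)) (1 : LamF)) := by
  refine ⟨?_, ?_, ?_, ?_⟩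
  · rw [divpow_chf1 (by simp), neg_one_pow_choose_two_two_mul, cast_choose_two_two_mul]
    push_cast
    congr 3
    ring
  · rw [divpow_chf0 (by simp), neg_one_pow_choose_two_two_mul_add_one, choose_two_two_mul_add_one]
    push_cast
    congr 3 <;> ring
  · rw [divpow_chf0 (by simp), neg_one_pow_choose_two_two_mul, cast_choose_two_two_mul]
    push_cast
    congr 3 <;> ring
  · rw [divpow_chf1 (by simp), neg_one_pow_choose_two_two_mul_add_one, choose_two_two_mul_add_one]
    push_cast
    congr 3
    ring
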